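/- Let k be a natural number and let C be an s-extremal singly even self-dual [24k+12, 12k+6, 4k+2] code. Then both neighbors N₁(C) = C₀ ∪ C₁ and N₃(C) = C₀ ∪ C₃ of C are s-extremal singly even self-dual [24k+12, 12k+6, 4k+4] codes; that is, each has minimum weight 4k+4 and its shadow has minimum weight 4k+2. -/

import Mathlib

open Finset

/-- Hamming weight of a binary vector. -/
def wt {n : ℕ} (x : Fin n → ZMod 2) : ℕ := hammingNorm x

/-- The dual of a set of binary vectors with respect to the standard inner product. -/
def dualSet {n : ℕ} (C : Set (Fin n → ZMod 2)) : Set (Fin n → ZMod 2) :=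
  {x | ∀ y ∈ C, ∑ i, x i * y i = 0}

/-- A binary linear code is self-dual if it equals its dual code. -/
def IsSelfDual {n : ℕ} (C : Submodule (ZMod 2) (Fin n → ZMod 2)) : Prop :=
  (C : Set (Fin n → ZMod 2)) = dualSet (C : Set (Fin n → ZMod 2))

/-- A self-dual code is singly even if some codeword has weight not divisible by 4. -/
def IsSinglyEvenSelfDual {n : ℕ} (C : Submodule (ZMod 2) (Fin n → ZMod 2)) : Prop :=
  IsSelfDual C ∧ ∃ x ∈ C, ¬ (4 ∣ wt x)

/-- The doubly even subcode `C₀` of `C` (as a set): codewords of weight ≡ 0 (mod 4). -/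
def evenSub {n : ℕ} (C : Submodule (ZMod 2) (Fin n → ZMod 2)) : Set (Fin n → ZMod 2) :=
  {x | x ∈ C ∧ 4 ∣ wt x}

/-- The shadow `S = C₀^⊥ \ C` of a singly even self-dual code. -/
def shadow {n : ℕ} (C : Submodule (ZMod 2) (Fin n → ZMod 2)) : Set (Fin n → ZMod 2) :=
  dualSet (evenSub C) \ (C : Set (Fin n → ZMod 2))

/-- The minimum (nonzero) weight of a set of vectors. -/
noncomputable def minWtSet {n : ℕ} (S : Set (Fin n → ZMod 2)) : ℕ :=
  sInf {w | ∃ x ∈ S, x ≠ 0 ∧ wt x = w}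

/-- The minimum weight of a code. -/
noncomputable def minWt {n : ℕ} (C : Submodule (ZMod 2) (Fin n → ZMod 2)) : ℕ :=
  minWtSet (C : Set (Fin n → ZMod 2))

/-- A singly even self-dual code of length `n` is s-extremal if
`d(S) = n/2 + 4 - 2 d(C)`. -/
def IsSExtremal {n : ℕ} (C : Submodule (ZMod 2) (Fin n → ZMod 2)) : Prop :=
  IsSinglyEvenSelfDual C ∧
    (minWtSet (shadow C) : ℤ) = ((n / 2 : ℕ) : ℤ) + 4 - 2 * (minWt C : ℤ)

/-- Two codes are equivalent if one is obtained from the other by permuting coordinates. -/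
def CodeEquiv {n : ℕ} (C D : Submodule (ZMod 2) (Fin n → ZMod 2)) : Prop :=
  ∃ σ : Equiv.Perm (Fin n),
    Submodule.map (LinearMap.funLeft (ZMod 2) (ZMod 2) σ) C = D

/-- The neighbor `C₀ ∪ (t + C₀)` of `C` obtained from a shadow vector `t`:
the span of the doubly even subcode together with `t`. -/
def neighborCode {n : ℕ} (C : Submodule (ZMod 2) (Fin n → ZMod 2))
    (t : Fin n → ZMod 2) : Submodule (ZMod 2) (Fin n → ZMod 2) :=
  Submodule.span (ZMod 2) (evenSub C ∪ {t})

open PowerSeries in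
lemma coeff_X_mul_D (G : PowerSeries ℂ) (m : ℕ) :
    coeff m (X * derivative ℂ G) = (m : ℂ) * coeff m G := by
  cases m with
  | zero => simp
  | succ m => rw [coeff_succ_X_mul, coeff_derivative]; push_cast; ring

open PowerSeries in
/-- the residue lemma -/
lemma residue_lemma (H K U : PowerSeries ℂ) (hHK : H * K = 1) (i : ℕ) :
    (i : ℂ) * coeff (2 * i) (U * (K ^ (i + 1) * (X * derivative ℂ H + 2 * H))) =
      coeff (2 * i) (X * derivative ℂ U * K ^ i) := by
  have hDK : derivative ℂ K = - K ^ 2 * derivative ℂ H := by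
    have h := congrArg (derivative ℂ) hHK
    rw [Derivation.leibniz, Derivation.map_one_eq_zero] at h
    simp only [smul_eq_mul] at h
    linear_combination K * h - derivative ℂ K * hHK
  have hDKi : derivative ℂ (K ^ i) = - (i : PowerSeries ℂ) * K ^ (i + 1) * derivative ℂ H := by
    cases i with
    | zero => simp
    | succ j =>
      rw [Derivation.leibniz_pow, hDK]
      simp only [smul_eq_mul, nsmul_eq_mul, Nat.add_sub_cancel]
      push_cast
      ring
  have key : C (i : ℂ) * (U * (K ^ (i + 1) * (X * derivative ℂ H + 2 * H))) =
      X * derivative ℂ U * K ^ i - X * derivative ℂ (U * K ^ i) + C ((2 * i : ℕ) : ℂ) * (U * K ^ i) := by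
    rw [Derivation.leibniz, hDKi]
    simp only [smul_eq_mul, map_natCast]
    push_cast
    linear_combination (2 * (i : PowerSeries ℂ) * U * K ^ i) * hHK
  have h2 := congrArg (coeff (2 * i)) key
  rw [coeff_C_mul] at h2
  rw [h2, map_add, map_sub, coeff_X_mul_D, coeff_C_mul]
  ring

open PowerSeries in
lemma vanish_lemma (H K w v : PowerSeries ℂ) (hHK : H * K = 1) (hwv : w * v = 1)
    (hw : w + v = 2 + 64 * (X ^ 2 * H)) (i : ℕ) (m : ℕ) : ∀ j, m + j < i →
    coeff (2 * i) ((X ^ 2 * H) ^ j * (w ^ m + v ^ m) *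
      (K ^ (i + 1) * (X * derivative ℂ H + 2 * H))) = 0 := by
  set E := X * derivative ℂ H + 2 * H with hE
  have base : ∀ j, j < i → coeff (2 * i) ((X ^ 2 * H) ^ j * (K ^ (i + 1) * E)) = 0 := by
    intro j hj
    obtain ⟨p, rfl⟩ : ∃ p, i = p + j := ⟨i - j, by omega⟩
    have h1 : (X ^ 2 * H) ^ j * (K ^ (p + j + 1) * E) = X ^ (2 * j) * (1 * (K ^ (p + 1) * E)) := by
      have : H ^ j * K ^ j = 1 := by rw [← mul_pow, hHK, one_pow]
      rw [mul_pow, pow_mul]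
      linear_combination ((X : PowerSeries ℂ) ^ 2) ^ j * K ^ (p + 1) * E * this
    rw [h1, show 2 * (p + j) = 2 * p + 2 * j by ring, coeff_X_pow_mul]
    have := residue_lemma H K 1 hHK p
    rw [Derivation.map_one_eq_zero] at this
    simp only [mul_zero, zero_mul, map_zero] at this
    rcases mul_eq_zero.mp this with h | h
    · have : p = 0 := by exact_mod_cast h
      omega
    · exact h
  induction m using Nat.strong_induction_on with
  | _ m ih =>
    intro j hj
    match m with
    | 0 =>
      have := base j (by omega)
      rw [show (X ^ 2 * H) ^ j * (w ^ 0 + v ^ 0) * (K ^ (i + 1) * E)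
        = C (2 : ℂ) * ((X ^ 2 * H) ^ j * (K ^ (i + 1) * E)) by
          rw [show (C (2 : ℂ) : PowerSeries ℂ) = 2 from map_ofNat C 2]; ring]
      rw [coeff_C_mul, this, mul_zero]
    | 1 =>
      have e1 := base j (by omega)
      have e2 := base (j + 1) (by omega)
      rw [show (X ^ 2 * H) ^ j * (w ^ 1 + v ^ 1) * (K ^ (i + 1) * E)
        = C (2 : ℂ) * ((X ^ 2 * H) ^ j * (K ^ (i + 1) * E))
         + C (64 : ℂ) * ((X ^ 2 * H) ^ (j + 1) * (K ^ (i + 1) * E)) by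
          rw [show (C (2 : ℂ) : PowerSeries ℂ) = 2 from map_ofNat C 2,
            show (C (64 : ℂ) : PowerSeries ℂ) = 64 from map_ofNat C 64, pow_one, pow_one, hw]; ring]
      rw [map_add, coeff_C_mul, coeff_C_mul, e1, e2]; simp
    | m + 2 =>
      have e1 := ih (m + 1) (by omega) j (by omega)
      have e2 := ih (m + 1) (by omega) (j + 1) (by omega)
      have e3 := ih m (by omega) j (by omega)
      have hrec : w ^ (m + 2) + v ^ (m + 2) =
          (2 + 64 * (X ^ 2 * H)) * (w ^ (m + 1) + v ^ (m + 1)) - (w ^ m + v ^ m) := by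
        rw [← hw]
        linear_combination (-(w ^ m + v ^ m)) * hwv
      rw [show (X ^ 2 * H) ^ j * (w ^ (m + 2) + v ^ (m + 2)) * (K ^ (i + 1) * E)
        = C (2 : ℂ) * ((X ^ 2 * H) ^ j * (w ^ (m + 1) + v ^ (m + 1)) * (K ^ (i + 1) * E))
         + C (64 : ℂ) * ((X ^ 2 * H) ^ (j + 1) * (w ^ (m + 1) + v ^ (m + 1)) * (K ^ (i + 1) * E))
         - ((X ^ 2 * H) ^ j * (w ^ m + v ^ m) * (K ^ (i + 1) * E)) by
          rw [show (C (2 : ℂ) : PowerSeries ℂ) = 2 from map_ofNat C 2,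
            show (C (64 : ℂ) : PowerSeries ℂ) = 64 from map_ofNat C 64, hrec]; ring]
      rw [map_sub, map_add, coeff_C_mul, coeff_C_mul, e1, e2, e3]; simp

open scoped ComplexOrder in
/-- sign condition on the coefficients -/
def PosSeries (f : PowerSeries ℂ) : Prop :=
  ∀ j, 0 ≤ Complex.I ^ j * PowerSeries.coeff j f

open scoped ComplexOrder in
open PowerSeries in
lemma PosSeries.mul {f g : PowerSeries ℂ} (hf : PosSeries f) (hg : PosSeries g) :
    PosSeries (f * g) := by
  intro j
  rw [coeff_mul, Finset.mul_sum]
  apply Finset.sum_nonneg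
  rintro ⟨a, b⟩ hab
  rw [Finset.HasAntidiagonal.mem_antidiagonal] at hab
  simp only at hab ⊢
  rw [← hab, pow_add, show Complex.I ^ a * Complex.I ^ b * (coeff a f * coeff b g)
    = (Complex.I ^ a * coeff a f) * (Complex.I ^ b * coeff b g) by ring]
  exact mul_nonneg (hf a) (hg b)

open scoped ComplexOrder in
open PowerSeries in
lemma PosSeries.one : PosSeries 1 := by
  intro j
  rw [coeff_one]
  split_ifs with h
  · subst h; simp
  · simp

lemma PosSeries.pow {f : PowerSeries ℂ} (hf : PosSeries f) (m : ℕ) : PosSeries (f ^ m) := by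
  induction m with
  | zero => simpa using PosSeries.one
  | succ m ih => rw [pow_succ]; exact ih.mul hf

open scoped ComplexOrder in
open PowerSeries in
lemma PosSeries.le_mul {f g : PowerSeries ℂ} (hf : PosSeries f) (hg : PosSeries g) (j : ℕ) :
    Complex.I ^ j * coeff j f * coeff 0 g ≤ Complex.I ^ j * coeff j (f * g) := by
  rw [coeff_mul, Finset.mul_sum, mul_assoc]
  have h0 : ∀ x ∈ Finset.HasAntidiagonal.antidiagonal j,
      0 ≤ Complex.I ^ j * (coeff x.1 f * coeff x.2 g) := by
    rintro ⟨a, b⟩ hab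
    rw [Finset.HasAntidiagonal.mem_antidiagonal] at hab
    simp only at hab ⊢
    rw [← hab, pow_add, show Complex.I ^ a * Complex.I ^ b * (coeff a f * coeff b g)
      = (Complex.I ^ a * coeff a f) * (Complex.I ^ b * coeff b g) by ring]
    exact mul_nonneg (hf a) (hg b)
  have hm : (j, 0) ∈ Finset.HasAntidiagonal.antidiagonal j := by simp
  rw [← Finset.add_sum_erase _ _ hm]
  exact le_add_of_nonneg_right (Finset.sum_nonneg fun x hx => h0 x (Finset.mem_of_mem_erase hx))

open scoped ComplexOrder in
open PowerSeries in
/-- inverse of `1 + X ^ 2` -/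
lemma exists_inv_p : ∃ a : PowerSeries ℂ, (1 + X ^ 2) * a = 1 ∧ PosSeries a ∧ coeff 0 a = 1 ∧
    ∀ l, Complex.I ^ (2 * l) * coeff (2 * l) a = 1 := by
  have hI : ∀ l, Complex.I ^ (2 * l) * Complex.I ^ (2 * l) = 1 := by
    intro l
    rw [← mul_pow, pow_mul]
    simp
  refine ⟨PowerSeries.mk fun j => if Even j then Complex.I ^ j else 0, ?_, ?_, ?_, ?_⟩
  · ext j
    rw [add_mul, one_mul, map_add, coeff_mk, coeff_X_pow_mul', coeff_one]
    rcases j with _ | _ | j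
    · simp
    · simp
    · simp only [coeff_mk]
      have : 2 ≤ j + 1 + 1 := by omega
      simp only [this, if_true, show j + 1 + 1 - 2 = j by omega]
      have h2 : Even (j + 1 + 1) ↔ Even j := by rw [Nat.even_add_one, Nat.even_add_one]; tauto
      by_cases hj : Even j
      · simp [h2, hj, pow_succ]
        rw [mul_assoc]; simp
      · simp [h2, hj]
  · intro j
    rw [coeff_mk]
    split_ifs with h
    · obtain ⟨l, rfl⟩ := h
      rw [← two_mul, hI l]
      exact zero_le_one
    · simp
  · simp
  · intro l
    rw [coeff_mk, if_pos (by simp), hI l]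

open scoped ComplexOrder in
open PowerSeries in
lemma exists_inv_q : ∃ e : PowerSeries ℂ, (1 - X ^ 4) * e = 1 ∧ PosSeries e ∧ coeff 0 e = 1 := by
  refine ⟨PowerSeries.mk fun j => if 4 ∣ j then 1 else 0, ?_, ?_, ?_⟩
  · ext j
    rw [sub_mul, one_mul, map_sub, coeff_mk, coeff_X_pow_mul', coeff_one]
    simp only [coeff_mk]
    by_cases h4 : 4 ≤ j
    · have : 4 ∣ j - 4 ↔ 4 ∣ j := by omega
      have : j ≠ 0 := by omega
      simp [*]
    · by_cases h0 : j = 0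
      · simp [h0]
      · have : ¬ 4 ∣ j := by omega
        simp [*]
  · intro j
    rw [coeff_mk]
    split_ifs with h
    · obtain ⟨l, rfl⟩ := h
      rw [pow_mul, Complex.I_pow_four]; simp
    · simp
  · simp

open scoped ComplexOrder in
open PowerSeries in
lemma posSeries_s : PosSeries (1 - X ^ 2) := by
  intro j
  rw [map_sub, coeff_one, coeff_X_pow]
  by_cases h0 : j = 0
  · subst h0; simp
  · by_cases h2 : j = 2
    · subst h2; simp
    · simp [h0, h2]

open scoped ComplexOrder in
open PowerSeries in
lemma final_coeff_ne (a e : PowerSeries ℂ) (ha : PosSeries a) (ha0 : coeff 0 a = 1)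
    (hal : ∀ l, Complex.I ^ (2 * l) * coeff (2 * l) a = 1) (he : PosSeries e)
    (he0 : coeff 0 e = 1) (k l : ℕ) :
    coeff (2 * l) (a * (a ^ 3 * (1 - X ^ 2) * e ^ (4 * k))) ≠ 0 := by
  intro h
  have := ha.le_mul (((ha.pow 3).mul posSeries_s).mul (he.pow (4 * k))) (2 * l)
  rw [h, hal] at this
  simp only [coeff_zero_eq_constantCoeff] at *
  simp [ha0, he0] at this
  exact absurd this (not_le_of_gt zero_lt_one)

lemma wt_eq_sum {n : ℕ} (x : Fin n → ZMod 2) : wt x = ∑ i, (x i).val := by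
  unfold wt hammingNorm
  rw [Finset.card_filter]
  apply Finset.sum_congr rfl
  intro i _
  have : ∀ a : ZMod 2, a = 0 ∨ a = 1 := by decide
  rcases this (x i) with h | h <;> simp [h, ZMod.val_one]

/-- intersection size -/
def isz {n : ℕ} (x y : Fin n → ZMod 2) : ℕ := ∑ i, (x i * y i).val

lemma wt_add {n : ℕ} (x y : Fin n → ZMod 2) : wt (x + y) + 2 * isz x y = wt x + wt y := by
  simp only [wt_eq_sum, isz, Finset.mul_sum, ← Finset.sum_add_distrib]
  apply Finset.sum_congr rfl
  intro i _
  simp only [Pi.add_apply]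
  generalize x i = a
  generalize y i = b
  revert a b
  decide

lemma isz_cast {n : ℕ} (x y : Fin n → ZMod 2) : ((isz x y : ℕ) : ZMod 2) = ∑ i, x i * y i := by
  simp [isz]

lemma isz_even {n : ℕ} {x y : Fin n → ZMod 2} (h : ∑ i, x i * y i = 0) : 2 ∣ isz x y := by
  rw [← isz_cast] at h
  exact (ZMod.natCast_eq_zero_iff _ _).mp h

lemma isz_odd {n : ℕ} {x y : Fin n → ZMod 2} (h : ∑ i, x i * y i ≠ 0) : ¬ 2 ∣ isz x y := by
  rw [← isz_cast] at h
  exact fun h' => h ((ZMod.natCast_eq_zero_iff _ _).mpr h')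

lemma isz_self {n : ℕ} (x : Fin n → ZMod 2) : isz x x = wt x := by
  rw [wt_eq_sum, isz]
  apply Finset.sum_congr rfl
  intro i _
  generalize x i = a
  revert a
  decide

lemma wt_ones {n : ℕ} : wt (1 : Fin n → ZMod 2) = n := by
  rw [wt_eq_sum]; simp [ZMod.val_one]

lemma isz_ones {n : ℕ} (x : Fin n → ZMod 2) : isz x 1 = wt x := by
  rw [wt_eq_sum, isz]; simp

lemma wt_add_ones {n : ℕ} (x : Fin n → ZMod 2) : wt (x + 1) + wt x = n := by
  have := wt_add x 1
  rw [wt_ones, isz_ones] at this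
  omega

lemma dot_add_left {n : ℕ} (x y z : Fin n → ZMod 2) :
    ∑ i, (x + y) i * z i = ∑ i, x i * z i + ∑ i, y i * z i := by
  simp [add_mul, Finset.sum_add_distrib]

lemma dot_comm {n : ℕ} (x y : Fin n → ZMod 2) : ∑ i, x i * y i = ∑ i, y i * x i := by
  simp [mul_comm]

/-- sign character -/
noncomputable def chi (a : ZMod 2) : PowerSeries ℂ := if a = 0 then 1 else -1

lemma chi_add (a b : ZMod 2) : chi (a + b) = chi a * chi b := by
  have : ∀ a : ZMod 2, a = 0 ∨ a = 1 := by decide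
  rcases this a with rfl | rfl <;> rcases this b with rfl | rfl <;>
    simp [chi, show (1 + 1 : ZMod 2) = 0 from rfl]

lemma chi_zero : chi 0 = 1 := by simp [chi]

lemma chi_ne {a : ZMod 2} (h : a ≠ 0) : chi a = -1 := by simp [chi, h]

lemma chi_sum {ι : Type*} (s : Finset ι) (f : ι → ZMod 2) :
    chi (∑ i ∈ s, f i) = ∏ i ∈ s, chi (f i) := by
  classical
  induction s using Finset.induction_on with
  | empty => simp [chi_zero]
  | insert a s ha ih => rw [Finset.sum_insert ha, Finset.prod_insert ha, chi_add, ih]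

open PowerSeries in
lemma expand {n : ℕ} (x : Fin n → ZMod 2) :
    (1 - X : PowerSeries ℂ) ^ wt x * (1 + X) ^ (n - wt x) =
      ∑ c : Fin n → ZMod 2, chi (∑ i, x i * c i) * X ^ wt c := by
  have h1 : ∀ c : Fin n → ZMod 2, chi (∑ i, x i * c i) * (X : PowerSeries ℂ) ^ wt c =
      ∏ i, (chi (x i * c i) * X ^ (c i).val) := by
    intro c
    rw [chi_sum, wt_eq_sum, ← Finset.prod_pow_eq_pow_sum, Finset.prod_mul_distrib]
  simp_rw [h1]
  rw [← Fintype.piFinset_univ,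
    ← Finset.prod_univ_sum (fun _ => Finset.univ) (fun i j => chi (x i * j) * (X : PowerSeries ℂ) ^ j.val)]
  have h2 : ∀ i, ∑ j : ZMod 2, chi (x i * j) * (X : PowerSeries ℂ) ^ j.val =
      if x i ≠ 0 then 1 - X else 1 + X := by
    intro i
    have : (Finset.univ : Finset (ZMod 2)) = {0, 1} := rfl
    rw [this, Finset.sum_pair (by decide)]
    by_cases h : x i = 0
    · simp [h, chi, ZMod.val_one]
    · simp [h, chi, ZMod.val_one]; ring
  simp_rw [h2]
  rw [Finset.prod_ite, Finset.prod_const, Finset.prod_const]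
  have h3 : wt x = (Finset.univ.filter fun i => x i ≠ 0).card := rfl
  have h4 := Finset.card_filter_add_card_filter_not (s := (Finset.univ : Finset (Fin n))) (fun i => x i ≠ 0)
  rw [Finset.card_univ, Fintype.card_fin, ← h3] at h4
  rw [← h3]
  congr 2
  omega

open PowerSeries in
/-- The key analytic contradiction. -/
lemma key_contra (k : ℕ) (N : Submodule (ZMod 2) (Fin (24 * k + 12) → ZMod 2))
    (S : Finset (Fin (24 * k + 12) → ZMod 2)) (hS : S.Nonempty)
    (hSN : ∀ x ∈ S, ∀ y ∈ N, x + y ∈ S)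
    (hN : ∀ c, c ∉ N → ∃ y ∈ N, ∑ i, y i * c i ≠ 0)
    (h1 : (1 : Fin (24 * k + 12) → ZMod 2) ∈ N)
    (hNw : ∀ c ∈ N, c ≠ 0 → 4 * k + 6 ≤ wt c)
    (hS4 : ∀ x ∈ S, wt x % 4 = 2)
    (hSw : ∀ x ∈ S, 4 * k + 2 ≤ wt x) : False := by
  obtain ⟨a, hpa, ha, ha0, hal⟩ := exists_inv_p
  obtain ⟨e, hqe, he, he0⟩ := exists_inv_q
  obtain ⟨b, hb⟩ : ∃ b, b = (1 + X ^ 2) * e := ⟨_, rfl⟩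
  have hsb : (1 - X ^ 2) * b = 1 := by rw [hb]; linear_combination hqe
  have heab : e = a * b := by rw [hb]; linear_combination (-e) * hpa
  set H : PowerSeries ℂ := (1 + X ^ 2) ^ 2 * b ^ 4 with hH
  set K : PowerSeries ℂ := a ^ 2 * (1 - X ^ 2) ^ 4 with hK
  have hHK : H * K = 1 := by
    have : H * K = ((1 + X ^ 2) * a) ^ 2 * ((1 - X ^ 2) * b) ^ 4 := by rw [hH, hK]; ring
    rw [this, hpa, hsb]; ring
  set w : PowerSeries ℂ := (1 + X) ^ 8 * b ^ 4 with hw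
  set v : PowerSeries ℂ := (1 - X) ^ 8 * b ^ 4 with hv
  have hwv : w * v = 1 := by
    have : w * v = ((1 - X ^ 2) * b) ^ 8 := by rw [hw, hv]; ring
    rw [this, hsb]; ring
  have hwv2 : w + v = 2 + 64 * (X ^ 2 * H) := by
    have : w + v = 2 * ((1 - X ^ 2) * b) ^ 4 + 64 * (X ^ 2 * H) := by rw [hw, hv, hH]; ring
    rw [this, hsb]; ring
  have hvan := vanish_lemma H K w v hHK hwv hwv2 (2 * k + 2)
  set E := K ^ (2 * k + 2 + 1) * (X * derivative ℂ H + 2 * H) with hE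
  set g : ℕ → PowerSeries ℂ := fun r => (1 - X) ^ r * (1 + X) ^ (24 * k + 12 - r) with hg
  -- the terms
  have hgw : ∀ m, m ≤ 2 * k + 1 → g (12 * k + 6 - 4 * m) * b ^ (12 * k + 6) = w ^ m := by
    intro m hm
    obtain ⟨q, hq⟩ : ∃ q, 12 * k + 6 = q + 4 * m := ⟨12 * k + 6 - 4 * m, by omega⟩
    have : g (12 * k + 6 - 4 * m) * b ^ (12 * k + 6) = ((1 - X ^ 2) * b) ^ q * w ^ m := by
      simp only [hg, hw]
      rw [show 12 * k + 6 - 4 * m = q by omega, show 24 * k + 12 - q = q + 8 * m by omega, hq,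
        show (1 - X ^ 2 : PowerSeries ℂ) = (1 - X) * (1 + X) by ring]
      simp only [mul_pow, pow_add, pow_mul]
      ring
    rw [this, hsb, one_pow, one_mul]
  have hgv : ∀ m, m ≤ 2 * k + 1 → g (12 * k + 6 + 4 * m) * b ^ (12 * k + 6) = v ^ m := by
    intro m hm
    obtain ⟨q, hq⟩ : ∃ q, 12 * k + 6 = q + 4 * m := ⟨12 * k + 6 - 4 * m, by omega⟩
    have : g (12 * k + 6 + 4 * m) * b ^ (12 * k + 6) = ((1 - X ^ 2) * b) ^ q * v ^ m := by
      simp only [hg, hv]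
      rw [show 24 * k + 12 - (12 * k + 6 + 4 * m) = q by omega,
        show 12 * k + 6 + 4 * m = q + 8 * m by omega, hq,
        show (1 - X ^ 2 : PowerSeries ℂ) = (1 - X) * (1 + X) by ring]
      simp only [mul_pow, pow_add, pow_mul]
      ring
    rw [this, hsb, one_pow, one_mul]
  have hT : ∀ m, m ≤ 2 * k + 1 → coeff (2 * (2 * k + 2)) (g (12 * k + 6 - 4 * m) * b ^ (12 * k + 6) * E)
      + coeff (2 * (2 * k + 2)) (g (12 * k + 6 + 4 * m) * b ^ (12 * k + 6) * E) = 0 := by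
    intro m hm
    rw [hgw m hm, hgv m hm, ← map_add, ← add_mul]
    have := hvan m 0 (by omega)
    simpa using this
  set L : ℕ → ℂ := fun r => coeff (2 * (2 * k + 2)) (g r * b ^ (12 * k + 6) * E) with hL
  have hpair : ∀ x ∈ S, L (wt x) + L (wt (x + 1)) = 0 := by
    intro x hx
    have e1 := wt_add_ones x
    have e2 := hS4 x hx
    have e3 := hSw x hx
    have e4 := hSw _ (hSN x hx 1 h1)
    rcases le_total (wt x) (12 * k + 6) with h | h
    · obtain ⟨m, hm⟩ : ∃ m, wt x + 4 * m = 12 * k + 6 := ⟨(12 * k + 6 - wt x) / 4, by omega⟩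
      have := hT m (by omega)
      rw [show 12 * k + 6 - 4 * m = wt x by omega, show 12 * k + 6 + 4 * m = wt (x + 1) by omega] at this
      exact this
    · obtain ⟨m, hm⟩ : ∃ m, wt x = 12 * k + 6 + 4 * m := ⟨(wt x - (12 * k + 6)) / 4, by omega⟩
      have := hT m (by omega)
      rw [show 12 * k + 6 + 4 * m = wt x by omega, show 12 * k + 6 - 4 * m = wt (x + 1) by omega] at this
      rw [add_comm]
      exact this
  have hxx : ∀ x : Fin (24 * k + 12) → ZMod 2, x + 1 + 1 = x := by
    intro x
    rw [add_assoc, show (1 + 1 : Fin (24 * k + 12) → ZMod 2) = 0 from funext fun _ => rfl, add_zero]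
  have hsum0 : ∑ x ∈ S, L (wt x) = 0 := by
    have e1 : ∑ x ∈ S, L (wt (x + 1)) = ∑ x ∈ S, L (wt x) :=
      Finset.sum_nbij' (fun x => x + 1) (fun x => x + 1) (fun x hx => hSN x hx 1 h1)
        (fun x hx => hSN x hx 1 h1) (fun x _ => hxx x) (fun x _ => hxx x) (fun x _ => rfl)
    have e2 : ∑ x ∈ S, (L (wt x) + L (wt (x + 1))) = 0 := Finset.sum_eq_zero hpair
    rw [Finset.sum_add_distrib, e1] at e2
    exact self_eq_neg.mp (eq_neg_of_add_eq_zero_left e2)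
  -- the sum as a power series
  have hF : ∃ R : PowerSeries ℂ, ∑ x ∈ S, g (wt x) = C (S.card : ℂ) + X ^ (4 * k + 6) * R := by
    have h2 : ∑ x ∈ S, g (wt x) = ∑ c : Fin (24 * k + 12) → ZMod 2,
        (∑ x ∈ S, chi (∑ i, x i * c i)) * X ^ wt c := by
      simp_rw [hg, expand, Finset.sum_mul]
      exact Finset.sum_comm
    have h3 : (∑ x ∈ S, chi (∑ i, x i * (0 : Fin (24 * k + 12) → ZMod 2) i)) *
        (X : PowerSeries ℂ) ^ wt (0 : Fin (24 * k + 12) → ZMod 2) = C (S.card : ℂ) := by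
      simp [wt_eq_sum, chi_zero]
    have h4 : (X : PowerSeries ℂ) ^ (4 * k + 6) ∣ ∑ c ∈ Finset.univ.erase
        (0 : Fin (24 * k + 12) → ZMod 2), (∑ x ∈ S, chi (∑ i, x i * c i)) * X ^ wt c := by
      apply Finset.dvd_sum
      intro c hc
      have hc0 : c ≠ 0 := (Finset.mem_erase.mp hc).1
      by_cases hcN : c ∈ N
      · exact Dvd.dvd.mul_left (pow_dvd_pow _ (hNw c hcN hc0)) _
      · obtain ⟨y, hy, hyc⟩ := hN c hcN
        have hyy : ∀ x : Fin (24 * k + 12) → ZMod 2, x + y + y = x := by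
          intro x
          rw [add_assoc, show y + y = 0 from CharTwo.add_self_eq_zero y, add_zero]
        have e1 : ∑ x ∈ S, chi (∑ i, (x + y) i * c i) = ∑ x ∈ S, chi (∑ i, x i * c i) :=
          Finset.sum_nbij' (fun x => x + y) (fun x => x + y) (fun x hx => hSN x hx y hy)
            (fun x hx => hSN x hx y hy) (fun x _ => hyy x) (fun x _ => hyy x) (fun x _ => rfl)
        have e2 : ∑ x ∈ S, chi (∑ i, (x + y) i * c i) = - ∑ x ∈ S, chi (∑ i, x i * c i) := by
          rw [← Finset.sum_neg_distrib]
          apply Finset.sum_congr rfl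
          intro x _
          rw [dot_add_left, chi_add, chi_ne hyc]; ring
        have e3 : ∑ x ∈ S, chi (∑ i, x i * c i) = 0 := by
          have e4 := e1.symm.trans e2
          ext m
          have e5 := congrArg (coeff m) e4
          rw [map_neg] at e5
          rw [map_zero]
          exact self_eq_neg.mp e5
        rw [e3, zero_mul]
        exact dvd_zero _
    obtain ⟨R, hR⟩ := h4
    refine ⟨R, ?_⟩
    rw [h2, ← Finset.add_sum_erase _ _ (Finset.mem_univ 0), h3, hR]
  obtain ⟨R, hR⟩ := hF
  have hcoef : ∑ x ∈ S, L (wt x) = (S.card : ℂ) * coeff (2 * (2 * k + 2)) (b ^ (12 * k + 6) * E) := by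
    have : ∑ x ∈ S, L (wt x) = coeff (2 * (2 * k + 2)) ((∑ x ∈ S, g (wt x)) * b ^ (12 * k + 6) * E) := by
      simp only [hL]
      rw [Finset.sum_mul, Finset.sum_mul, map_sum]
    rw [this, hR, show (C (S.card : ℂ) + X ^ (4 * k + 6) * R) * b ^ (12 * k + 6) * E
      = C (S.card : ℂ) * (b ^ (12 * k + 6) * E) + X ^ (4 * k + 6) * (R * b ^ (12 * k + 6) * E) by ring,
      map_add, coeff_C_mul, coeff_X_pow_mul', if_neg (by omega), add_zero]
  rw [hsum0] at hcoef
  have hcard : (S.card : ℂ) ≠ 0 := by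
    exact_mod_cast (Finset.card_pos.mpr hS).ne'
  have hz : coeff (2 * (2 * k + 2)) (b ^ (12 * k + 6) * E) = 0 := by
    rcases mul_eq_zero.mp hcoef.symm with h | h
    · exact absurd h hcard
    · exact h
  have hres := residue_lemma H K (b ^ (12 * k + 6)) hHK (2 * k + 2)
  rw [← hE, hz, mul_zero] at hres
  have hDb : derivative ℂ b = 2 * X * b ^ 2 := by
    have h := congrArg (derivative ℂ) hsb
    rw [Derivation.leibniz, Derivation.map_one_eq_zero, map_sub, Derivation.map_one_eq_zero,
      Derivation.leibniz_pow, PowerSeries.derivative_X] at h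
    simp only [smul_eq_mul, nsmul_eq_mul] at h
    push_cast at h
    linear_combination b * h - derivative ℂ b * hsb
  have hU : X * derivative ℂ (b ^ (12 * k + 6)) * K ^ (2 * k + 2) =
      C (((2 * (12 * k + 6) : ℕ) : ℂ)) * (X ^ 2 * (a * (a ^ 3 * (1 - X ^ 2) * e ^ (4 * k)))) := by
    rw [Derivation.leibniz_pow, hDb, heab, hK]
    simp only [smul_eq_mul, nsmul_eq_mul, map_natCast]
    have h8 : ((1 - X ^ 2) * b) ^ (8 * k + 7) = 1 := by rw [hsb, one_pow]
    rw [show 12 * k + 6 - 1 = 12 * k + 5 by omega]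
    push_cast
    rw [show (a ^ 2 * (1 - X ^ 2 : PowerSeries ℂ) ^ 4) ^ (2 * k + 2) = a ^ (4 * k + 4) * (1 - X ^ 2) ^ (8 * k + 8) by
      rw [mul_pow, ← pow_mul, ← pow_mul]; ring_nf]
    rw [mul_pow] at h8
    rw [mul_pow a b]
    linear_combination (2 * (12 * (k : PowerSeries ℂ) + 6) * X ^ 2 * a ^ (4 * k + 4) * b ^ (4 * k) * (1 - X ^ 2)) * h8
  rw [hU, coeff_C_mul, coeff_X_pow_mul', if_pos (by omega),
    show 2 * (2 * k + 2) - 2 = 2 * (2 * k + 1) by omega] at hres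
  rcases mul_eq_zero.mp hres.symm with h | h
  · have : 2 * (12 * k + 6) = 0 := by exact_mod_cast h
    omega
  · exact final_coeff_ne a e ha ha0 hal he he0 k (2 * k + 1) h

lemma selfDual_finrank {n : ℕ} (N : Submodule (ZMod 2) (Fin n → ZMod 2)) (h : IsSelfDual N) :
    2 * Module.finrank (ZMod 2) N = n := by
  set B : LinearMap.BilinForm (ZMod 2) (Fin n → ZMod 2) := dotProductBilin (ZMod 2) (ZMod 2) with hB
  have hBa : ∀ x y, B x y = ∑ i, x i * y i := fun x y => rfl
  have hrefl : B.IsRefl := by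
    intro x y hxy
    rw [hBa] at hxy ⊢
    rw [dot_comm]; exact hxy
  have hnd : B.Nondegenerate := by
    refine (LinearMap.IsRefl.nondegenerate_iff_separatingLeft hrefl).mpr ?_
    intro x hx
    ext i
    have := hx (Pi.single i 1)
    rw [hBa] at this
    simpa [Pi.single_apply] using this
  have ho : B.orthogonal N = N := by
    apply SetLike.coe_injective
    rw [h]
    ext x
    simp only [SetLike.mem_coe, LinearMap.BilinForm.mem_orthogonal_iff, hBa]
    constructor
    · intro hx y hy
      rw [dot_comm]; exact hx y hy
    · intro hx y hy
      rw [dot_comm]; exact hx y hy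
  have h1 := LinearMap.BilinForm.finrank_orthogonal hnd N
  rw [ho, Module.finrank_fin_fun] at h1
  have := Submodule.finrank_le N
  rw [Module.finrank_fin_fun] at this
  omega

lemma minWtSet_eq {n : ℕ} (S : Set (Fin n → ZMod 2)) (d : ℕ) (hex : ∃ x ∈ S, x ≠ 0 ∧ wt x = d)
    (hle : ∀ x ∈ S, x ≠ 0 → d ≤ wt x) : minWtSet S = d := by
  apply le_antisymm
  · exact Nat.sInf_le hex
  · apply le_csInf ⟨d, hex⟩
    rintro w ⟨x, hx, hx0, rfl⟩
    exact hle x hx hx0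

lemma minWtSet_spec {n : ℕ} {S : Set (Fin n → ZMod 2)} {d : ℕ} (hd : minWtSet S = d) (h0 : d ≠ 0) :
    (∃ x ∈ S, x ≠ 0 ∧ wt x = d) ∧ ∀ x ∈ S, x ≠ 0 → d ≤ wt x := by
  constructor
  · have := Nat.sInf_mem (s := {w | ∃ x ∈ S, x ≠ 0 ∧ wt x = w})
      (Nat.nonempty_of_pos_sInf (by unfold minWtSet at hd; omega))
    change minWtSet S ∈ _ at this
    rw [hd] at this
    exact this
  · intro x hx hx0
    rw [← hd]
    exact Nat.sInf_le ⟨x, hx, hx0, rfl⟩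

lemma wt_zero' {n : ℕ} : wt (0 : Fin n → ZMod 2) = 0 := by simp [wt]

lemma add_self' {n : ℕ} (x : Fin n → ZMod 2) : x + x = 0 :=
  funext fun i => CharTwo.add_self_eq_zero (x i)

/-- Proposition 2.1(iii): the neighbors `N₁(C) = C₀ ∪ C₁` and `N₃(C) = C₀ ∪ C₃` of an
s-extremal singly even self-dual `[24k+12, 12k+6, 4k+2]` code are s-extremal (and extremal)
singly even self-dual `[24k+12, 12k+6, 4k+4]` codes. -/
theorem sExtremal_neighbor_24k12 (k : ℕ)
    (C : Submodule (ZMod 2) (Fin (24 * k + 12) → ZMod 2))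
    (hse : IsSinglyEvenSelfDual C)
    (hdim : Module.finrank (ZMod 2) C = 12 * k + 6)
    (hd : minWt C = 4 * k + 2)
    (hshadow : minWtSet (shadow C) = 4 * k + 6)
    (t : Fin (24 * k + 12) → ZMod 2) (ht : t ∈ shadow C) :
    IsSinglyEvenSelfDual (neighborCode C t) ∧
    Module.finrank (ZMod 2) (neighborCode C t) = 12 * k + 6 ∧
    minWt (neighborCode C t) = 4 * k + 4 ∧
    minWtSet (shadow (neighborCode C t)) = 4 * k + 2 := by
  obtain ⟨hsd, c2, hc2, hc2w⟩ := hse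
  have hCmem : ∀ x, x ∈ C ↔ ∀ y ∈ C, ∑ i, x i * y i = 0 := by
    intro x
    rw [← SetLike.mem_coe, hsd]
    constructor
    · intro h y hy
      exact h y hy
    · intro h y hy
      exact h y hy
  have hCC : ∀ x ∈ C, ∀ y ∈ C, ∑ i, x i * y i = 0 := fun x hx => (hCmem x).mp hx
  have hCeven : ∀ x ∈ C, 2 ∣ wt x := fun x hx => by
    rw [← isz_self]; exact isz_even (hCC x hx x hx)
  have h1C : (1 : Fin (24 * k + 12) → ZMod 2) ∈ C := by
    rw [hCmem]
    intro y hy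
    rw [dot_comm, ← isz_cast, isz_ones]
    exact (ZMod.natCast_eq_zero_iff _ _).mpr (hCeven y hy)
  have h10 : (1 : Fin (24 * k + 12) → ZMod 2) ∈ evenSub C := ⟨h1C, by rw [wt_ones]; omega⟩
  have h00 : (0 : Fin (24 * k + 12) → ZMod 2) ∈ evenSub C := ⟨C.zero_mem, by rw [wt_zero']; simp⟩
  -- sums in C
  have hadd : ∀ x ∈ evenSub C, ∀ y ∈ evenSub C, x + y ∈ evenSub C := by
    rintro x ⟨hx, hx4⟩ y ⟨hy, hy4⟩
    refine ⟨C.add_mem hx hy, ?_⟩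
    have e1 := wt_add x y
    have e2 := isz_even (hCC x hx y hy)
    omega
  have hadd2 : ∀ x ∈ C, x ∉ evenSub C → x + c2 ∈ evenSub C := by
    intro x hx hx4
    refine ⟨C.add_mem hx hc2, ?_⟩
    have e1 := wt_add x c2
    have e2 := isz_even (hCC x hx c2 hc2)
    have e3 := hCeven x hx
    have e4 := hCeven c2 hc2
    have e5 : ¬ 4 ∣ wt x := fun h => hx4 ⟨hx, h⟩
    omega
  -- x in the dual of C₀ and orthogonal to c2 lies in C
  have hdual : ∀ x ∈ dualSet (evenSub C), ∑ i, x i * c2 i = 0 → x ∈ C := by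
    intro x hx hxc
    rw [hCmem]
    intro y hy
    by_cases hy4 : y ∈ evenSub C
    · exact hx y hy4
    · have e1 := hx _ (hadd2 y hy hy4)
      rw [dot_comm, dot_add_left, dot_comm c2, hxc, add_zero, dot_comm] at e1
      exact e1
  have hCd : ∀ x ∈ C, x ∈ dualSet (evenSub C) := fun x hx y hy => hCC x hx y hy.1
  have hdadd : ∀ x ∈ dualSet (evenSub C), ∀ y ∈ dualSet (evenSub C),
      x + y ∈ dualSet (evenSub C) := by
    intro x hx y hy z hz
    rw [dot_add_left, hx z hz, hy z hz, add_zero]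
  have h01 : ∀ a : ZMod 2, a ≠ 0 → a = 1 := by decide
  have hSc2 : ∀ x ∈ shadow C, ∑ i, x i * c2 i = 1 := by
    intro x hx
    exact h01 _ fun h => hx.2 (hdual x hx.1 h)
  have hSS : ∀ x ∈ shadow C, ∀ y ∈ shadow C, x + y ∈ C := by
    intro x hx y hy
    apply hdual _ (hdadd x hx.1 y hy.1)
    rw [dot_add_left, hSc2 x hx, hSc2 y hy]; rfl
  -- shadow vectors have odd product with C₂
  have hSC2 : ∀ x ∈ shadow C, ∀ y ∈ C, y ∉ evenSub C → ∑ i, x i * y i ≠ 0 := by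
    intro x hx y hy hy4 h
    have e1 := hx.1 _ (hadd2 y hy hy4)
    rw [dot_comm, dot_add_left, dot_comm c2, dot_comm y, hSc2 x hx, h] at e1
    exact absurd e1 (by decide)
  obtain ⟨⟨u, hu, hu0, huw⟩, hSw⟩ := minWtSet_spec hshadow (by omega)
  obtain ⟨⟨q, hq, hq0, hqw⟩, hCw⟩ := minWtSet_spec hd (by omega)
  have hSw' : ∀ x ∈ shadow C, 4 * k + 6 ≤ wt x := fun x hx =>
    hSw x hx (fun h => hx.2 (by rw [h]; exact C.zero_mem))
  have hS4 : ∀ x ∈ shadow C, wt x % 4 = 2 := by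
    intro x hx
    have e1 := wt_add u (u + x)
    rw [← add_assoc, add_self', zero_add] at e1
    have hc := hSS u hu x hx
    have e3 := hCeven _ hc
    by_cases h : u + x ∈ evenSub C
    · have e2 := isz_even (hu.1 _ h)
      have := h.2
      omega
    · have e2 := isz_odd (hSC2 u hu _ hc h)
      have : ¬ 4 ∣ wt (u + x) := fun h' => h ⟨hc, h'⟩
      omega
  have ht4 := hS4 t ht
  -- the neighbor
  have hNmem : ∀ x, x ∈ neighborCode C t ↔ x ∈ evenSub C ∨ x + t ∈ evenSub C := by
    intro x
    constructor
    · intro hx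
      unfold neighborCode at hx
      induction hx using Submodule.span_induction with
      | mem x hx =>
        rcases hx with hx | hx
        · exact Or.inl hx
        · rw [Set.mem_singleton_iff] at hx
          right; rw [hx, add_self']; exact h00
      | zero => exact Or.inl h00
      | add x y _ _ hx hy =>
        rcases hx with hx | hx <;> rcases hy with hy | hy
        · exact Or.inl (hadd x hx y hy)
        · right; rw [add_assoc]; exact hadd x hx _ hy
        · right; rw [add_right_comm]; exact hadd _ hx y hy
        · left
          have := hadd _ hx _ hy
          rwa [add_add_add_comm, add_self', add_zero] at this
      | smul a x _ hx =>
        by_cases ha : a = 0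
        · left; rw [ha, zero_smul]; exact h00
        · rw [h01 a ha, one_smul]; exact hx
    · rintro (hx | hx)
      · exact Submodule.subset_span (Or.inl hx)
      · have e1 : x + t ∈ neighborCode C t := Submodule.subset_span (Or.inl hx)
        have e2 : t ∈ neighborCode C t := Submodule.subset_span (Or.inr rfl)
        have := (neighborCode C t).add_mem e1 e2
        rwa [add_assoc, add_self', add_zero] at this
  have htN : t ∈ neighborCode C t := (hNmem t).mpr (Or.inr (by rw [add_self']; exact h00))
  have hxt : ∀ x : Fin (24 * k + 12) → ZMod 2, x = t + (x + t) := by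
    intro x; rw [add_left_comm, add_self', add_zero]
  -- vectors of N outside C₀ are in the shadow
  have hNS : ∀ x, x + t ∈ evenSub C → x ∈ shadow C := by
    intro x hx
    rw [hxt x]
    refine ⟨hdadd t ht.1 _ (hCd _ hx.1), fun h => ht.2 ?_⟩
    have := C.add_mem h hx.1
    rwa [add_assoc, add_self', add_zero] at this
  have htt : ∑ i, t i * t i = 0 := by
    rw [← isz_cast, isz_self]
    exact (ZMod.natCast_eq_zero_iff _ _).mpr (by omega)
  have hNd : ∀ x ∈ neighborCode C t, x ∈ dualSet (evenSub C) := by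
    intro x hx
    rcases (hNmem x).mp hx with h | h
    · exact hCd x h.1
    · exact (hNS x h).1
  have hNt : ∀ x ∈ neighborCode C t, ∑ i, x i * t i = 0 := by
    intro x hx
    rcases (hNmem x).mp hx with h | h
    · rw [dot_comm]; exact ht.1 x h
    · rw [hxt x, dot_add_left, htt, dot_comm, ht.1 _ h, add_zero]
  have hNN : ∀ x ∈ neighborCode C t, ∀ y ∈ neighborCode C t, ∑ i, x i * y i = 0 := by
    intro x hx y hy
    rcases (hNmem y).mp hy with h | h
    · exact hNd x hx y h
    · rw [hxt y, dot_comm, dot_add_left, dot_comm t, hNt x hx, dot_comm, hNd x hx _ h, add_zero]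
  have hNdual : ∀ x, (∀ y ∈ neighborCode C t, ∑ i, x i * y i = 0) → x ∈ neighborCode C t := by
    intro x hx
    have hx0 : x ∈ dualSet (evenSub C) := fun y hy => hx y ((hNmem y).mpr (Or.inl hy))
    have hxt0 := hx t htN
    by_cases hxC : x ∈ C
    · refine (hNmem x).mpr (Or.inl ?_)
      by_contra h4
      exact hSC2 t ht x hxC h4 (by rw [dot_comm]; exact hxt0)
    · have hxS : x ∈ shadow C := ⟨hx0, hxC⟩
      refine (hNmem x).mpr (Or.inr ?_)
      by_contra h4
      refine hSC2 t ht (x + t) (hSS x hxS t ht) h4 ?_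
      rw [dot_comm, dot_add_left, hxt0, htt, add_zero]
  have hNsd : IsSelfDual (neighborCode C t) := by
    ext x
    exact ⟨fun hx y hy => hNN x hx y hy, fun hx => hNdual x hx⟩
  have hNev : evenSub (neighborCode C t) = evenSub C := by
    ext x
    constructor
    · rintro ⟨hx, hx4⟩
      rcases (hNmem x).mp hx with h | h
      · exact h
      · have := hS4 x (hNS x h)
        omega
    · intro hx
      exact ⟨(hNmem x).mpr (Or.inl hx), hx.2⟩
  have hNsh : shadow (neighborCode C t) = dualSet (evenSub C) \ (neighborCode C t) := by
    unfold _root_.shadow; rw [hNev]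
  have hCN : ∀ x ∈ C, ¬ 4 ∣ wt x → x ∈ shadow (neighborCode C t) := by
    intro x hx hx4
    rw [hNsh]
    refine ⟨hCd x hx, fun h => ?_⟩
    rcases (hNmem x).mp h with h | h
    · exact hx4 h.2
    · exact (hNS x h).2 hx
  have hNshw : ∀ x ∈ shadow (neighborCode C t), wt x % 4 = 2 ∧ 4 * k + 2 ≤ wt x := by
    intro x hx
    rw [hNsh] at hx
    by_cases hxC : x ∈ C
    · have h4 : ¬ 4 ∣ wt x := fun h => hx.2 ((hNmem x).mpr (Or.inl ⟨hxC, h⟩))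
      have e1 := hCeven x hxC
      have e2 := hCw x hxC (fun h => h4 (by rw [h, wt_zero']; simp))
      omega
    · have hxS : x ∈ shadow C := ⟨hx.1, hxC⟩
      have := hSw' x hxS
      have := hS4 x hxS
      omega
  have hNw : ∀ x ∈ neighborCode C t, x ≠ 0 → 4 * k + 4 ≤ wt x := by
    intro x hx hx0
    rcases (hNmem x).mp hx with h | h
    · have := hCw x h.1 hx0
      have := h.2
      omega
    · have := hSw' x (hNS x h)
      omega
  refine ⟨⟨hNsd, t, htN, by omega⟩, ?_, ?_, ?_⟩
  · have := selfDual_finrank _ hNsd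
    omega
  · apply minWtSet_eq _ _ _ hNw
    by_contra hno
    push Not at hno
    classical
    refine key_contra k (neighborCode C t)
      (Finset.univ.filter fun x => x ∈ shadow (neighborCode C t)) ⟨q, ?_⟩ ?_ ?_ ?_ ?_ ?_ ?_
    · rw [Finset.mem_filter]
      exact ⟨Finset.mem_univ _, hCN q hq (by omega)⟩
    · intro x hx y hy
      rw [Finset.mem_filter] at hx ⊢
      refine ⟨Finset.mem_univ _, ?_⟩
      have hx := hx.2
      rw [hNsh] at hx ⊢
      refine ⟨hdadd x hx.1 y (hNd y hy), fun h => hx.2 ?_⟩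
      have := (neighborCode C t).add_mem h hy
      rwa [add_assoc, add_self', add_zero] at this
    · intro c hc
      by_contra h
      push Not at h
      exact hc (hNdual c fun y hy => by rw [dot_comm]; exact h y hy)
    · exact (hNmem 1).mpr (Or.inl h10)
    · intro c hc hc0
      have e1 := hNw c hc hc0
      have e2 := hno c hc hc0
      have e3 : 2 ∣ wt c := by rw [← isz_self]; exact isz_even (hNN c hc c hc)
      omega
    · intro x hx
      exact (hNshw x (Finset.mem_filter.mp hx).2).1
    · intro x hx
      exact (hNshw x (Finset.mem_filter.mp hx).2).2
  · apply minWtSet_eq _ _ ⟨q, hCN q hq (by omega), hq0, hqw⟩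
    intro x hx _
    exact (hNshw x hx).2
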